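/- arXiv:1911.03297 — 2 statements merged into one kernel-verified Lean document; each statement's English description precedes it below -/
import Mathlib

section
/- Let k ≥ 3, let G be a finite simple graph, and let P = {w_1, …, w_p} be a pendant path of G with p = k + 2 + x(k + 1) + c vertices, where x ≥ 1 and c ≥ 0 are integers; set Q = V(G) \ P. Let φ be a proper k-coloring of the subgraph of G induced by Q that is α-balanced. Then φ can be extended to a proper k-coloring φ* of G (agreeing with φ on Q) that is α*-balanced for some α* ≤ max{α − x, 1}. -/
/-- `φ` is a proper coloring of the simple graph `G`. -/
def IsProperColoring {V : Type*} {k : ℕ} (G : SimpleGraph V) (φ : V → Fin k) : Prop :=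
  ∀ u v : V, G.Adj u v → φ u ≠ φ v

/-- `w` enumerates (injectively) a pendant path of `G`: the edges of `G` incident to the
vertices `w 0, …, w (p-1)` are exactly the consecutive path edges together with exactly one
edge from `w 0` to a vertex `u` outside the path and exactly one edge from `w (p-1)` to a
vertex `v` outside the path. -/
def IsPendantPath {V : Type*} {p : ℕ} (G : SimpleGraph V) (w : Fin p → V) : Prop :=
  Function.Injective w ∧
  ∃ u v : V, u ∉ Set.range w ∧ v ∉ Set.range w ∧
    ∀ (i : Fin p) (b : V),
      G.Adj (w i) b ↔
        ((∃ j : Fin p, b = w j ∧ (i.val + 1 = j.val ∨ j.val + 1 = i.val)) ∨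
          (i.val = 0 ∧ b = u) ∨ (i.val = p - 1 ∧ b = v))

/-- The balance of the `k`-coloring `φ` on the vertex set `S`: the difference between the
largest and the smallest size of a color class within `S`. -/
def balanceOn {V : Type*} {k : ℕ} (S : Finset V) (φ : V → Fin k) : ℕ :=
  Finset.univ.sup fun ij : Fin k × Fin k =>
    (S.filter fun v => φ v = ij.1).card - (S.filter fun v => φ v = ij.2).card

/-!
Let `m = (p - 1) / 2` and spend the `p` path vertices one at a time on a currently smallest color
class among those that received fewer than `m` vertices. If afterwards the class of `d` exceeds
that of `c` by more than `max (α - x) 1`, then `d` received nothing or `c` received `m`. In the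
first case every color received at most `x` vertices, `c` fewer than `x` and `d` none, so that
fewer than `(k - 1) * x` were spent. Dually, in the second case every color has at most `x` unused
places, `d` fewer than `x` and `c` none, so that fewer than `(k - 1) * x` of the `k * m` places are
unused. Both contradict the length of the path. Since no color received more than `m` vertices, the
multiset of colors can be arranged along the path by always taking the most frequent remaining
color that differs from the previous one, with ties broken in favor of the color of the vertex at
the far end.
-/

section LevelFilling

variable {κ : Type*}

/-- The multiset `M` of colors is a level filling of the color classes of sizes `a`, at most `m`
new vertices per class: a class that received a vertex exceeds a class with room left by at most
one. -/
structure IsLevelFilling [DecidableEq κ] (a : κ → ℕ) (m : ℕ) (M : Multiset κ) : Prop where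
  count_le : ∀ c, M.count c ≤ m
  add_count_le : ∀ c d, M.count c < m → d ∈ M → a d + M.count d ≤ a c + M.count c + 1

variable {a : κ → ℕ} {m : ℕ} {M : Multiset κ}

theorem IsLevelFilling.zero [DecidableEq κ] : IsLevelFilling a m 0 where
  count_le := by simp
  add_count_le := by simp

theorem IsLevelFilling.cons [DecidableEq κ] (hM : IsLevelFilling a m M) {d : κ}
    (hd : M.count d < m) (hmin : ∀ c, M.count c < m → a d + M.count d ≤ a c + M.count c) :
    IsLevelFilling a m (d ::ₘ M) where
  count_le c := by
    have := hM.count_le c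
    rw [Multiset.count_cons]
    split_ifs with h
    · subst h; omega
    · omega
  add_count_le c e hc he := by
    have hcM : M.count c < m := (Multiset.count_le_count_cons c d M).trans_lt hc
    have := hmin c hcM
    rw [Multiset.count_cons, Multiset.count_cons]
    rcases eq_or_ne e d with rfl | hne
    · rw [if_pos rfl]
      omega
    · have := hM.add_count_le c e hcM ((Multiset.mem_cons.mp he).resolve_left hne)
      rw [if_neg hne]
      omega

theorem exists_count_lt [Fintype κ] [DecidableEq κ] (h : M.card < Fintype.card κ * m) :
    ∃ c, M.count c < m := by
  by_contra! hle
  have : Fintype.card κ * m ≤ ∑ c, M.count c := by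
    simpa using Finset.card_nsmul_le_sum Finset.univ _ m fun c _ => hle c
  rw [Multiset.sum_count_eq_card fun _ _ => Finset.mem_univ _] at this
  omega

theorem exists_isLevelFilling [Fintype κ] [DecidableEq κ] (a : κ → ℕ) {q : ℕ}
    (hq : q ≤ Fintype.card κ * m) : ∃ M : Multiset κ, IsLevelFilling a m M ∧ M.card = q := by
  induction q with
  | zero => exact ⟨0, .zero, rfl⟩
  | succ q ih =>
    obtain ⟨M, hM, rfl⟩ := ih (by omega)
    obtain ⟨c, hc⟩ := exists_count_lt hq
    obtain ⟨d, hd, hmin⟩ := Finset.exists_min_image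
      (Finset.univ.filter fun c => M.count c < m) (fun c => a c + M.count c) ⟨c, by simpa using hc⟩
    simp only [Finset.mem_filter, Finset.mem_univ, true_and] at hd hmin
    exact ⟨d ::ₘ M, hM.cons hd hmin, Multiset.card_cons d M⟩

theorem sum_lt_card_sub_one_mul [Fintype κ] {f : κ → ℕ} {x : ℕ} {i j : κ}
    (hle : ∀ l, f l ≤ x) (hi : f i < x) (hj : f j = 0) (hij : i ≠ j) :
    ∑ l, f l < (Fintype.card κ - 1) * x := by
  classical
  calc ∑ l, f l = ∑ l ∈ Finset.univ.erase j, f l := (Finset.sum_erase _ hj).symm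
    _ < ∑ _l ∈ Finset.univ.erase j, x :=
      Finset.sum_lt_sum (fun l _ => hle l) ⟨i, by simpa using hij, hi⟩
    _ = (Fintype.card κ - 1) * x := by simp [Finset.card_erase_of_mem]

theorem IsLevelFilling.card_lt_of_notMem [Fintype κ] [DecidableEq κ]
    (hM : IsLevelFilling a m M) {α x : ℕ} (ha : ∀ c d, a d ≤ a c + α) {c d : κ}
    (hgap : a c + M.count c + (α - x) < a d) (hd : d ∉ M) :
    M.card < (Fintype.card κ - 1) * x := by
  have hcd := ha c d
  have hcount : ∀ e, M.count e ≤ x := fun e => by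
    rcases (hM.count_le c).lt_or_eq with hc | hc
    · by_cases he : e ∈ M
      · have := hM.add_count_le c e hc he
        have := ha e d
        omega
      · simp [Multiset.count_eq_zero.mpr he]
    · have := hM.count_le e
      omega
  have hne : c ≠ d := by
    rintro rfl
    omega
  rw [← Multiset.sum_count_eq_card fun e _ => Finset.mem_univ e]
  exact sum_lt_card_sub_one_mul hcount (by omega) (Multiset.count_eq_zero.mpr hd) hne

theorem IsLevelFilling.card_mul_lt_of_count_eq [Fintype κ] [DecidableEq κ]
    (hM : IsLevelFilling a m M) {α x : ℕ} (ha : ∀ c d, a d ≤ a c + α) {c d : κ}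
    (hgap : a c + m + (α - x) < a d + M.count d) (hd : d ∈ M) (hc : M.count c = m) :
    Fintype.card κ * m < M.card + (Fintype.card κ - 1) * x := by
  have hcd := ha c d
  have hdm := hM.count_le d
  have hslack : ∀ e, m - M.count e ≤ x := fun e => by
    rcases (hM.count_le e).lt_or_eq with he | he
    · have := hM.add_count_le e d he hd
      have := ha c e
      omega
    · omega
  have hne : d ≠ c := by
    rintro rfl
    omega
  have hlt := sum_lt_card_sub_one_mul hslack (i := d) (j := c) (by omega) (by omega) hne
  calc Fintype.card κ * m = ∑ e, (m - M.count e) + ∑ e, M.count e := by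
        rw [← Finset.sum_add_distrib,
          Finset.sum_congr rfl fun e _ => Nat.sub_add_cancel (hM.count_le e)]
        simp
    _ = ∑ e, (m - M.count e) + M.card := by
        rw [Multiset.sum_count_eq_card fun e _ => Finset.mem_univ e]
    _ < M.card + (Fintype.card κ - 1) * x := by omega

theorem IsLevelFilling.add_count_le_add_max [Fintype κ] [DecidableEq κ]
    (hM : IsLevelFilling a m M) {α x : ℕ} (ha : ∀ c d, a d ≤ a c + α)
    (hx : (Fintype.card κ - 1) * x ≤ M.card)
    (hm : M.card + (Fintype.card κ - 1) * x ≤ Fintype.card κ * m) (c d : κ) :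
    a d + M.count d ≤ a c + M.count c + max (α - x) 1 := by
  by_contra! hgap
  by_cases hd : d ∈ M
  · have hc : M.count c = m := by
      refine (hM.count_le c).antisymm (not_lt.mp fun hlt => ?_)
      have := hM.add_count_le c d hlt hd
      omega
    exact hm.not_gt (hM.card_mul_lt_of_count_eq ha (by omega) hd hc)
  · rw [Multiset.count_eq_zero.mpr hd] at hgap
    exact hx.not_gt (hM.card_lt_of_notMem (c := c) ha (by omega) hd)

end LevelFilling

section Arrangement

variable {κ : Type*} [DecidableEq κ]

theorem count_add_count_le_card {c d : κ} (h : c ≠ d) (M : Multiset κ) :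
    M.count c + M.count d ≤ M.card := by
  induction M using Multiset.induction_on with
  | empty => simp
  | cons e M ih =>
    rw [Multiset.count_cons, Multiset.count_cons, Multiset.card_cons]
    split_ifs with hc hd
    · exact absurd (hc.trans hd.symm) h
    all_goals omega

theorem exists_mem_ne_of_count_lt_card {M : Multiset κ} {A : κ} (h : M.count A < M.card) :
    ∃ d ∈ M, d ≠ A := by
  by_contra! hA
  exact h.ne (Multiset.count_eq_card.mpr fun d hd => (hA d hd).symm)

theorem exists_next_color {M : Multiset κ} {A B : κ} (hM : M ≠ 0)
    (h : ∀ c, 2 * M.count c + (if c = A then 1 else 0) + (if c = B then 1 else 0) ≤ M.card + 1) :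
    ∃ d ∈ M, d ≠ A ∧ ∀ c ≠ d, 2 * M.count c + (if c = B then 1 else 0) ≤ M.card := by
  have hA := h A
  rw [if_pos rfl] at hA
  have hcard := Multiset.card_pos.mpr hM
  obtain ⟨e, he, heA⟩ : ∃ e ∈ M, e ≠ A := exists_mem_ne_of_count_lt_card (by omega)
  obtain ⟨d, hd, hmax⟩ := Finset.exists_max_image (M.toFinset.filter (· ≠ A))
    (fun c => 2 * M.count c + if c = B then 1 else 0) ⟨e, by simp [he, heA]⟩
  simp only [Finset.mem_filter, Multiset.mem_toFinset, and_imp] at hd hmax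
  refine ⟨d, hd.1, hd.2, fun c hcd => ?_⟩
  rcases eq_or_ne c A with rfl | hcA
  · omega
  by_cases hc : c ∈ M
  · have hfreq := hmax c hc hcA
    have hpair := count_add_count_le_card hcd M
    have hB : (if c = B then 1 else 0) + (if d = B then 1 else 0) ≤ 1 := by
      split_ifs with hc hd
      · exact absurd (hc.trans hd.symm) hcd
      all_goals simp
    omega
  · rw [Multiset.count_eq_zero.mpr hc]
    split_ifs <;> omega

theorem exists_isChain_ne_of_count_le (M : Multiset κ) (A B : κ)
    (h : ∀ c, 2 * M.count c + (if c = A then 1 else 0) + (if c = B then 1 else 0) ≤ M.card + 1) :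
    ∃ l : List κ, (l : Multiset κ) = M ∧ (A :: (l ++ [B])).IsChain (· ≠ ·) := by
  induction hn : M.card generalizing M A with
  | zero =>
    obtain rfl := Multiset.card_eq_zero.mp hn
    have hAB : A ≠ B := by
      rintro rfl
      simpa using h A
    exact ⟨[], rfl, by simpa using hAB⟩
  | succ n ih =>
    have hM : M ≠ 0 := Multiset.card_pos.mp (by omega)
    obtain ⟨d, hd, hdA, hother⟩ := exists_next_color hM h
    obtain ⟨M, rfl⟩ := Multiset.exists_cons_of_mem hd
    rw [Multiset.card_cons] at hn h hother
    obtain ⟨l, rfl, hl⟩ := ih M d (fun c => by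
      rcases eq_or_ne c d with rfl | hcd
      · have := h c
        rw [Multiset.count_cons_self] at this
        rw [if_pos rfl]
        omega
      · have := hother c hcd
        rw [Multiset.count_cons_of_ne hcd] at this
        rw [if_neg hcd]
        omega) (by omega)
    exact ⟨d :: l, rfl, List.isChain_cons_cons.mpr ⟨hdA.symm, hl⟩⟩

end Arrangement

section PendantPath

variable {V κ : Type*} {k p : ℕ}

theorem balanceOn_le_iff {S : Finset V} {φ : V → Fin k} {b : ℕ} :
    balanceOn S φ ≤ b ↔
      ∀ c d, (S.filter fun v => φ v = d).card ≤ (S.filter fun v => φ v = c).card + b := by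
  simp only [balanceOn, Finset.sup_le_iff, Finset.mem_univ, true_imp_iff, Prod.forall,
    tsub_le_iff_left]
  exact forall_comm

theorem card_filter_extend_get [Fintype V] [DecidableEq V] [DecidableEq κ] {w : Fin p → V}
    (hw : Function.Injective w) (l : List.Vector κ p) (φ : V → κ) (c : κ) :
    (Finset.univ.filter fun v => Function.extend w l.get φ v = c).card =
      ((Finset.univ \ Finset.univ.image w).filter fun v => φ v = c).card + l.toList.count c := by
  have hpath : l.toList.count c = ∑ i, if l.get i = c then 1 else 0 := by
    simp only [← Fin.card_filter_univ_eq_vector_get_eq_count, Finset.card_filter, eq_comm]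
  rw [hpath, Finset.card_filter, Finset.card_filter,
    ← Finset.sum_sdiff (Finset.subset_univ (Finset.univ.image w)), Finset.sum_image hw.injOn]
  simp only [hw.extend_apply]
  congr 1
  refine Finset.sum_congr rfl fun v hv => ?_
  rw [Function.extend_apply' _ _ _ (by simpa using hv)]

theorem isProperColoring_extend {G : SimpleGraph V} {w : Fin p → V} (hw : Function.Injective w)
    {χ : Fin p → Fin k} {φ : V → Fin k}
    (hφ : ∀ a b : V, a ∉ Set.range w → b ∉ Set.range w → G.Adj a b → φ a ≠ φ b)
    (hχ : ∀ i b, G.Adj (w i) b → χ i ≠ Function.extend w χ φ b) :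
    IsProperColoring G (Function.extend w χ φ) := by
  intro a b hab
  by_cases ha : a ∈ Set.range w
  · obtain ⟨i, rfl⟩ := ha
    rw [hw.extend_apply]
    exact hχ i b hab
  by_cases hb : b ∈ Set.range w
  · obtain ⟨i, rfl⟩ := hb
    rw [hw.extend_apply χ φ i]
    exact (hχ i a hab.symm).symm
  · rw [Function.extend_apply' _ _ _ ha, Function.extend_apply' _ _ _ hb]
    exact hφ a b ha hb hab

theorem vector_get_eq_getElem (A B : κ) (l : List.Vector κ p) (i : Fin p) :
    l.get i = (A :: (l.toList ++ [B]))[i.val + 1]'(by simp) := by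
  rw [List.getElem_cons_succ, List.getElem_append_left (by simp), List.Vector.get_eq_get_toList]
  rfl

theorem IsPendantPath.exists_isProperColoring_extend {G : SimpleGraph V} {w : Fin p → V}
    (hw : IsPendantPath G w) {φ : V → Fin k}
    (hφ : ∀ a b : V, a ∉ Set.range w → b ∉ Set.range w → G.Adj a b → φ a ≠ φ b) :
    ∃ A B : Fin k, ∀ l : List.Vector (Fin k) p, (A :: (l.toList ++ [B])).IsChain (· ≠ ·) →
      IsProperColoring G (Function.extend w l.get φ) := by
  obtain ⟨hinj, u, v, hu, hv, hadj⟩ := hw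
  refine ⟨φ u, φ v, fun l hl => isProperColoring_extend hinj hφ fun i b hib => ?_⟩
  have hi := i.isLt
  rw [List.isChain_iff_getElem] at hl
  rcases (hadj i b).mp hib with ⟨j, rfl, hij | hij⟩ | ⟨h0, rfl⟩ | ⟨h0, rfl⟩
  · rw [hinj.extend_apply, vector_get_eq_getElem (φ u) (φ v), vector_get_eq_getElem (φ u) (φ v)]
    simp only [← hij]
    exact hl _ _
  · rw [hinj.extend_apply, vector_get_eq_getElem (φ u) (φ v), vector_get_eq_getElem (φ u) (φ v)]
    simp only [← hij]
    exact (hl _ _).symm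
  · rw [Function.extend_apply' _ _ _ hu, vector_get_eq_getElem (φ b) (φ v)]
    simp only [h0]
    exact (hl 0 _).symm
  · have hlast := hl p (by simp)
    rw [Function.extend_apply' _ _ _ hv, vector_get_eq_getElem (φ u) (φ b)]
    simp only [show i.val + 1 = p by omega]
    simpa using hlast

theorem stmt5_general [Fintype V] [DecidableEq V] {G : SimpleGraph V} {x : ℕ} (hp : 0 < p)
    (hx : (k - 1) * x ≤ p) (hm : p + (k - 1) * x ≤ k * ((p - 1) / 2))
    {w : Fin p → V} (hw : IsPendantPath G w) {φ : V → Fin k}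
    (hφ : ∀ a b : V, a ∉ Set.range w → b ∉ Set.range w → G.Adj a b → φ a ≠ φ b) :
    ∃ ψ : V → Fin k, (∀ v : V, v ∉ Set.range w → ψ v = φ v) ∧ IsProperColoring G ψ ∧
      balanceOn Finset.univ ψ ≤
        max (balanceOn (Finset.univ \ Finset.univ.image w) φ - x) 1 := by
  set Q := Finset.univ \ Finset.univ.image w
  obtain ⟨A, B, hproper⟩ := hw.exists_isProperColoring_extend hφ
  obtain ⟨M, hM, hcard⟩ := exists_isLevelFilling (κ := Fin k) (m := (p - 1) / 2) (q := p)
    (fun c => (Q.filter fun v => φ v = c).card) (by rw [Fintype.card_fin]; omega)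
  obtain ⟨l, rfl, hl⟩ := exists_isChain_ne_of_count_le M A B fun c => by
    have := hM.count_le c
    split_ifs <;> omega
  obtain ⟨l, rfl⟩ : ∃ l' : List.Vector (Fin k) p, l'.toList = l := ⟨⟨l, hcard⟩, rfl⟩
  refine ⟨Function.extend w l.get φ, fun v hv => Function.extend_apply' _ _ _ hv, hproper l hl,
    balanceOn_le_iff.mpr fun c d => ?_⟩
  rw [card_filter_extend_get hw.1, card_filter_extend_get hw.1, ← Multiset.coe_count,
    ← Multiset.coe_count]
  refine hM.add_count_le_add_max (balanceOn_le_iff.mp le_rfl) ?_ ?_ c d <;>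
    rwa [hcard, Fintype.card_fin]

end PendantPath

theorem add_sub_one_mul_le_mul_half {k p x : ℕ} (hk : 3 ≤ k) (hp : k + 2 + x * (k + 1) ≤ p) :
    p + (k - 1) * x ≤ k * ((p - 1) / 2) := by
  obtain ⟨r, rfl⟩ := Nat.exists_eq_add_of_le' hk
  have hp' : 5 + 4 * x ≤ p := by nlinarith
  set m := (p - 1) / 2
  have hxm : x ≤ m := by omega
  calc p + (r + 3 - 1) * x = p + 2 * x + r * x := by
        rw [show r + 3 - 1 = r + 2 by omega]
        ring
    _ ≤ 3 * m + r * m := by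
        gcongr
        omega
    _ = (r + 3) * m := by ring

/-- Extending an `α`-balanced proper `k`-coloring of `G − P` along a pendant path `P` with
`k + 2 + x(k+1) + c` vertices (`x ≥ 1`, `c ≥ 0`), obtaining an `α*`-balanced proper
coloring of `G` with `α* ≤ max {α − x, 1}`. -/
theorem stmt5 {V : Type*} [Fintype V] [DecidableEq V] (G : SimpleGraph V)
    (k p x c : ℕ) (hk : 3 ≤ k) (hx : 1 ≤ x) (hp : p = k + 2 + x * (k + 1) + c)
    (w : Fin p → V) (hw : IsPendantPath G w)
    (φ : V → Fin k) (α : ℕ)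
    (hproper : ∀ a b : V, a ∉ Set.range w → b ∉ Set.range w → G.Adj a b → φ a ≠ φ b)
    (hbal : balanceOn (Finset.univ \ Finset.univ.image w) φ = α) :
    ∃ (ψ : V → Fin k) (α' : ℕ),
      (∀ v : V, v ∉ Set.range w → ψ v = φ v) ∧
      IsProperColoring G ψ ∧
      balanceOn Finset.univ ψ = α' ∧
      α' ≤ max (α - x) 1 := by
  obtain ⟨ψ, hψφ, hψ, hψbal⟩ := stmt5_general (by omega) (by nlinarith [Nat.sub_le k 1])
    (add_sub_one_mul_le_mul_half hk (x := x) (by omega)) hw hproper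
  exact ⟨ψ, _, hψφ, hψ, rfl, hbal ▸ hψbal⟩
end

section
/- Let k ≥ 3 and let G be a finite simple graph containing pairwise disjoint pendant paths P_1, …, P_r, each P_i having p_i ≥ 2k + 3 vertices, where p_i = k + 2 + c_i + x_i(k + 1) with integers x_i ≥ 1 and 0 ≤ c_i ≤ k, and such that for each i the two neighbors outside P_i of the endpoints of P_i lie in Q = V(G) \ (P_1 ∪ ⋯ ∪ P_r). Suppose x_1 + ⋯ + x_r ≥ |Q| and let q = |Q|. Then G admits an equitable k-coloring if and only if the graph obtained from the subgraph of G induced by Q by adding q(k − 1) isolated vertices admits an equitable k-coloring. -/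
/-- Every color class of `φ` has size `⌊n/k⌋` or `⌈n/k⌉`, where `n` is the number of
vertices. -/
def IsEquitable {V : Type*} [Fintype V] {k : ℕ} (φ : V → Fin k) : Prop :=
  ∀ i : Fin k,
    (Finset.univ.filter fun v => φ v = i).card = Fintype.card V / k ∨
    (Finset.univ.filter fun v => φ v = i).card = (Fintype.card V + k - 1) / k

/-- The graph obtained from `G` by adding `m` isolated vertices. -/
def addIsolated {W : Type*} (G : SimpleGraph W) (m : ℕ) : SimpleGraph (W ⊕ Fin m) :=
  SimpleGraph.fromRel fun a b =>
    match a, b with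
    | Sum.inl u, Sum.inl v => G.Adj u v
    | _, _ => False


/-!
An equitable coloring of either graph restricts to a coloring of `G[Q]`, and every `k`-coloring of
`G[Q]` becomes equitable with `q (k - 1)` isolated vertices, used to raise all `k` color classes
to size `q`. So it remains to extend a `k`-coloring of `G[Q]` to an equitable coloring of `G`.

Prescribe class sizes `⌊n/k⌋` or `⌈n/k⌉`. Each is at least `q`, so what is left after coloring `Q`
is a multiset of `p_1 + ⋯ + p_r` colors, to be distributed over the paths. A path with `p` vertices
can be colored with any multiset of `p` colors none of which occurs more than `h = ⌊(p - 1)/2⌋`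
times, whatever the colors of its two outside neighbors: color greedily from one end, always
using the most frequent remaining color that is allowed, with ties broken in favor of the color
attached to the other end. As `2 h_i ≤ p_i ≤ 3 h_i`, the colors can be split accordingly, one path
at a time, as soon as no color is left more than `h_1 + ⋯ + h_r` times.
-/

open Finset

section Multiset

variable {α ι : Type*}

theorem exists_map_univ_eq {n : ℕ} {s : Multiset α} (hs : s.card = n) :
    ∃ f : Fin n → α, univ.val.map f = s := by
  subst hs
  induction s using Quotient.inductionOn with
  | _ l => exact ⟨l.get, (Fin.univ_val_map l.get).trans (congrArg _ l.ofFn_get)⟩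

theorem exists_between_card_eq {l u : Multiset α} (hlu : l ≤ u) {n : ℕ} (hl : l.card ≤ n)
    (hu : n ≤ u.card) : ∃ s, l ≤ s ∧ s ≤ u ∧ s.card = n := by
  obtain ⟨r, rfl⟩ := Multiset.le_iff_exists_add.1 hlu
  rw [Multiset.card_add] at hu
  obtain ⟨t, ht⟩ : ∃ t, t ∈ Multiset.powersetCard (n - l.card) r := by
    rw [← Multiset.card_pos_iff_exists_mem, Multiset.card_powersetCard]
    exact Nat.choose_pos (by omega)
  obtain ⟨htr, hcard⟩ := Multiset.mem_powersetCard.1 ht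
  refine ⟨l + t, Multiset.le_add_right l t, add_le_add_right htr l, ?_⟩
  rw [Multiset.card_add]
  omega

variable [DecidableEq α]

theorem count_sub_nsmul_dedup (d : Multiset α) (n : ℕ) (j : α) :
    (d - n • d.dedup).count j = d.count j - n := by
  rw [Multiset.count_sub, Multiset.count_nsmul, Multiset.count_dedup]
  split_ifs with hj
  · rw [mul_one]
  · simp [Multiset.count_eq_zero_of_notMem hj]

-- If at most `m` elements occur more than `n` times, each contributes at most `h`; otherwise at
-- least `(m + 1) * n` occurrences are removed.
theorem card_sub_nsmul_dedup_le {m n h p : ℕ} {d : Multiset α} (hcard : d.card ≤ (m + 1) * n + p)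
    (hcount : ∀ j, d.count j ≤ n + h) (hp : m * h ≤ p) : (d - n • d.dedup).card ≤ p := by
  set e := d - n • d.dedup
  have hcount_e : ∀ j, e.count j = d.count j - n := count_sub_nsmul_dedup d n
  rcases le_or_gt #e.toFinset m with hfew | hmany
  · calc e.card = ∑ j ∈ e.toFinset, e.count j := (Multiset.toFinset_sum_count_eq e).symm
      _ ≤ #e.toFinset • h := sum_le_card_nsmul _ _ _ fun j _ => by grind
      _ ≤ m * h := Nat.mul_le_mul_right h hfew
      _ ≤ p := hp
  · have hsplit : e.card + #e.toFinset * n ≤ d.card := by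
      calc e.card + #e.toFinset * n = ∑ j ∈ e.toFinset, (e.count j + n) := by
            rw [sum_add_distrib, Multiset.toFinset_sum_count_eq, sum_const, smul_eq_mul]
        _ = ∑ j ∈ e.toFinset, d.count j := sum_congr rfl fun j hj => by
            have := Multiset.count_pos.2 (Multiset.mem_toFinset.1 hj)
            grind
        _ ≤ ∑ j ∈ d.toFinset, d.count j := sum_le_sum_of_subset
            (Multiset.toFinset_subset.2 (Multiset.subset_of_le (Multiset.sub_le_self ..)))
        _ = d.card := Multiset.toFinset_sum_count_eq d
    have : (m + 1) * n ≤ #e.toFinset * n := Nat.mul_le_mul_right n hmany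
    omega

-- `s` has to take the occurrences of each element beyond the `h'`-th and may take at most `h`.
theorem exists_add_eq_of_count_le {m p p' h h' : ℕ} (hp : m * h ≤ p) (hp_le : p ≤ (m + 1) * h)
    (hp' : m * h' ≤ p') (hp'_le : p' ≤ (m + 1) * h') {d : Multiset α} (hcard : d.card = p + p')
    (hcount : ∀ j, d.count j ≤ h + h') :
    ∃ s t : Multiset α, s + t = d ∧ s.card = p ∧ (∀ j, s.count j ≤ h) ∧ ∀ j, t.count j ≤ h' := by
  have hlu : d - h' • d.dedup ≤ d ∩ h • d.dedup := by
    refine Multiset.le_iff_count.2 fun j => ?_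
    have hsplit := congrArg (Multiset.count j) (Multiset.sub_add_inter d (h • d.dedup))
    rw [Multiset.count_add, count_sub_nsmul_dedup] at hsplit
    rw [count_sub_nsmul_dedup]
    grind
  have hlower : (d - h' • d.dedup).card ≤ p :=
    card_sub_nsmul_dedup_le (by omega) (fun j => (hcount j).trans_eq (add_comm h h')) hp
  have hupper : p ≤ (d ∩ h • d.dedup).card := by
    have hexcess : (d - h • d.dedup).card ≤ p' :=
      card_sub_nsmul_dedup_le (by omega) hcount hp'
    have hsplit := congrArg Multiset.card (Multiset.sub_add_inter d (h • d.dedup))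
    rw [Multiset.card_add] at hsplit
    omega
  obtain ⟨s, hls, hsu, hs⟩ := exists_between_card_eq hlu hlower hupper
  refine ⟨s, d - s, add_tsub_cancel_of_le (hsu.trans Multiset.inter_le_left), hs, fun j => ?_,
    fun j => ?_⟩
  · have := Multiset.count_le_of_le j (hsu.trans Multiset.inter_le_right)
    rw [Multiset.count_nsmul, Multiset.count_dedup] at this
    grind
  · have := Multiset.count_le_of_le j hls
    rw [count_sub_nsmul_dedup] at this
    rw [Multiset.count_sub]
    omega

theorem exists_sum_eq_of_count_le {m : ℕ} {p h : ι → ℕ} (hp : ∀ i, m * h i ≤ p i)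
    (hp_le : ∀ i, p i ≤ (m + 1) * h i) (I : Finset ι) {d : Multiset α}
    (hcard : d.card = ∑ i ∈ I, p i) (hcount : ∀ j, d.count j ≤ ∑ i ∈ I, h i) :
    ∃ s : ι → Multiset α, ∑ i ∈ I, s i = d ∧
      ∀ i ∈ I, (s i).card = p i ∧ ∀ j, (s i).count j ≤ h i := by
  classical
  induction I using Finset.induction_on generalizing d with
  | empty => exact ⟨0, by simpa [eq_comm] using hcard⟩
  | insert a I ha ih =>
    simp only [sum_insert ha] at hcard hcount
    obtain ⟨s, t, rfl, hs, hs_count, ht_count⟩ :=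
      exists_add_eq_of_count_le (hp a) (hp_le a)
        (by rw [mul_sum]; exact sum_le_sum fun i _ => hp i)
        (by rw [mul_sum]; exact sum_le_sum fun i _ => hp_le i) hcard hcount
    obtain ⟨S, hS, hS_spec⟩ := ih (by rw [Multiset.card_add] at hcard; omega) ht_count
    have hne : ∀ i ∈ I, i ≠ a := fun i hi hia => ha (hia ▸ hi)
    refine ⟨Function.update S a s, ?_, fun i hi => ?_⟩
    · rw [sum_insert ha, Function.update_self,
        sum_congr rfl fun i hi => Function.update_of_ne (hne i hi) _ _, hS]
    · rcases mem_insert.1 hi with rfl | hi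
      · rw [Function.update_self]
        exact ⟨hs, hs_count⟩
      · rw [Function.update_of_ne (hne i hi)]
        exact hS_spec i hi

theorem count_add_count_le_card_s7 {i j : α} (hij : i ≠ j) (s : Multiset α) :
    s.count i + s.count j ≤ s.card := by
  induction s using Multiset.induction_on with
  | empty => simp
  | cons a s ih => grind [Multiset.count_cons, Multiset.card_cons]

theorem exists_ne_count_erase_le {s : Multiset α} (hs₀ : s ≠ 0) {a b : α}
    (hs : ∀ j, 2 * s.count j + ({a, b} : Multiset α).count j ≤ s.card + 1) :
    ∃ c ∈ s, c ≠ a ∧ ∀ j, 2 * (s.erase c).count j + ({c, b} : Multiset α).count j ≤ s.card := by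
  have hpos : 0 < s.card := Multiset.card_pos.2 hs₀
  simp only [Multiset.insert_eq_cons, Multiset.count_cons] at hs ⊢
  have hne : (s.toFinset.erase a).Nonempty := by
    by_contra! hempty
    have hall : ∀ j ∈ s, a = j := fun j hj => by
      by_contra hja
      have : j ∈ s.toFinset.erase a := by simp [hj, Ne.symm hja]
      simp [hempty] at this
    have := hs a
    rw [Multiset.count_eq_card.2 hall] at this
    grind
  -- Two distinct elements cannot both exceed the bound, so it suffices to remove the heaviest one.
  obtain ⟨c, hc, hmax⟩ := exists_max_image (s.toFinset.erase a)
    (fun j => 2 * s.count j + ({b} : Multiset α).count j) hne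
  obtain ⟨hca, hcs⟩ : c ≠ a ∧ c ∈ s := by simpa using hc
  refine ⟨c, hcs, hca, fun j => ?_⟩
  have hj := hs j
  have hb : ({b} : Multiset α).count j ≤ 1 :=
    (Multiset.count_le_card j _).trans_eq (Multiset.card_singleton b)
  by_cases hjc : j = c
  · subst hjc
    have := Multiset.count_pos.2 hcs
    grind [Multiset.count_erase_self]
  rw [Multiset.count_erase_of_ne hjc]
  by_cases hja : j = a
  · grind
  by_cases hjs : j ∈ s
  · have := count_add_count_le_card_s7 hjc s
    have := count_add_count_le_card_s7 hjc {b}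
    have := hmax j (by simp [hja, hjs])
    grind [Multiset.card_singleton]
  · grind [Multiset.count_eq_zero_of_notMem hjs]

theorem exists_isChain_ne_of_count_le_s7 (s : Multiset α) (a b : α)
    (hs : ∀ j, 2 * s.count j + ({a, b} : Multiset α).count j ≤ s.card + 1) :
    ∃ l : List α, (l : Multiset α) = s ∧ (a :: (l ++ [b])).IsChain (· ≠ ·) := by
  induction hn : s.card generalizing s a with
  | zero =>
    obtain rfl := Multiset.card_eq_zero.1 hn
    have hab : a ≠ b := by
      rintro rfl
      simpa using hs a
    exact ⟨[], rfl, by simpa using hab⟩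
  | succ n ih =>
    obtain ⟨c, hcs, hca, hc⟩ := exists_ne_count_erase_le (Multiset.card_pos.1 (by omega)) hs
    have hcard : (s.erase c).card = n := by rw [Multiset.card_erase_of_mem hcs, hn, Nat.pred_succ]
    obtain ⟨l, hl, hchain⟩ := ih (s.erase c) c (fun j => by rw [hcard, ← hn]; exact hc j) hcard
    refine ⟨c :: l, by rw [← Multiset.cons_coe, hl, Multiset.cons_erase hcs], ?_⟩
    exact List.isChain_cons_cons.2 ⟨hca.symm, hchain⟩

theorem exists_card_eq_count_eq_div_or_ceilDiv [Fintype α] (hα : 0 < Fintype.card α) (n : ℕ) :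
    ∃ s : Multiset α, s.card = n ∧
      ∀ j, s.count j = n / Fintype.card α ∨ s.count j = n ⌈/⌉ Fintype.card α := by
  have hcount : ∀ (q : ℕ) (j : α), (q • (univ : Finset α).val).count j = q := fun q j => by
    rw [Multiset.count_nsmul, Multiset.count_univ, mul_one]
  have hcard : ∀ q : ℕ, (q • (univ : Finset α).val).card = q * Fintype.card α := fun q => by
    rw [Multiset.card_nsmul, Finset.card_val, Finset.card_univ]
  have hceil : n ≤ n ⌈/⌉ Fintype.card α * Fintype.card α := by
    rw [mul_comm]
    exact (ceilDiv_le_iff_le_mul hα).1 le_rfl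
  have hceil_le : n ⌈/⌉ Fintype.card α ≤ n / Fintype.card α + 1 := by
    rw [ceilDiv_le_iff_le_mul hα]
    exact (Nat.lt_mul_div_succ n hα).le
  have hfloor_le : n / Fintype.card α ≤ n ⌈/⌉ Fintype.card α :=
    Nat.div_le_of_le_mul (by rwa [mul_comm] at hceil)
  obtain ⟨s, hls, hsu, hs⟩ := exists_between_card_eq
    (nsmul_le_nsmul_left (Multiset.zero_le (univ : Finset α).val) hfloor_le)
    ((hcard _).trans_le (Nat.div_mul_le_self n _)) (hceil.trans_eq (hcard _).symm)
  refine ⟨s, hs, fun j => ?_⟩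
  have hl := (hcount _ j).symm.trans_le (Multiset.count_le_of_le j hls)
  have hu := (Multiset.count_le_of_le j hsu).trans_eq (hcount _ j)
  omega

end Multiset

section Coloring

variable {V W α : Type*}

theorem isEquitable_iff_count [Fintype V] {k : ℕ} (φ : V → Fin k) :
    IsEquitable φ ↔ ∀ j, (univ.val.map φ).count j = Fintype.card V / k ∨
      (univ.val.map φ).count j = Fintype.card V ⌈/⌉ k := by
  have hcount : ∀ j, (univ.val.map φ).count j = #{v | φ v = j} := fun j => by
    simp only [Multiset.count_map, eq_comm, Finset.card, Finset.filter_val]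
  simp only [IsEquitable, hcount, Nat.ceilDiv_eq_add_pred_div]

theorem addIsolated_adj {H : SimpleGraph W} {m : ℕ} {x y : W ⊕ Fin m} :
    (addIsolated H m).Adj x y ↔ ∃ u v, x = Sum.inl u ∧ y = Sum.inl v ∧ H.Adj u v := by
  have hadj (u v : W) : u ≠ v ∧ (H.Adj u v ∨ H.Adj v u) ↔ H.Adj u v := by
    rw [H.adj_comm v u, or_self]
    exact and_iff_right_of_imp SimpleGraph.Adj.ne
  rcases x with u | u <;> rcases y with v | v <;> simp [addIsolated, hadj]

theorem isProperColoring_addIsolated {H : SimpleGraph W} {m k : ℕ} {ψ : W ⊕ Fin m → Fin k} :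
    IsProperColoring (addIsolated H m) ψ ↔ IsProperColoring H (ψ ∘ Sum.inl) := by
  constructor
  · exact fun hψ u v huv => hψ _ _ (addIsolated_adj.2 ⟨u, v, rfl, rfl, huv⟩)
  · intro hψ x y hxy
    obtain ⟨u, v, rfl, rfl, huv⟩ := addIsolated_adj.1 hxy
    exact hψ u v huv

theorem exists_isEquitable_sumElim [Fintype W] {k m : ℕ} (hk : 0 < k)
    (hm : m = Fintype.card W * (k - 1)) (c : W → Fin k) :
    ∃ f : Fin m → Fin k, IsEquitable (Sum.elim c f) := by
  have hcard : Fintype.card W + m = Fintype.card W * k := by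
    rw [hm, ← mul_one_add, Nat.add_sub_cancel' (Nat.one_le_of_lt hk)]
  have hle : univ.val.map c ≤ Fintype.card W • (univ : Finset (Fin k)).val := by
    refine Multiset.le_iff_count.2 fun j => (Multiset.count_le_card j _).trans_eq ?_
    simp [Multiset.count_univ]
  obtain ⟨d, hd⟩ := Multiset.le_iff_exists_add.1 hle
  have hd_card : d.card = m := by
    have := congrArg Multiset.card hd
    simp only [Multiset.card_nsmul, Multiset.card_add, Multiset.card_map, Finset.card_val,
      Finset.card_univ, Fintype.card_fin] at this
    omega
  obtain ⟨f, hf⟩ := exists_map_univ_eq hd_card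
  have hmap : univ.val.map (Sum.elim c f) = Fintype.card W • (univ : Finset (Fin k)).val := by
    rw [hd, ← hf, ← Finset.univ_disjSum_univ, Finset.val_disjSum, Multiset.disjSum,
      Multiset.map_add, Multiset.map_map, Multiset.map_map]
    rfl
  refine ⟨f, (isEquitable_iff_count _).2 fun j => Or.inl ?_⟩
  rw [hmap, Multiset.count_nsmul, Multiset.count_univ, Fintype.card_sum, Fintype.card_fin, hcard,
    Nat.mul_div_cancel _ hk, mul_one]

theorem exists_isEquitable_addIsolated_iff [Fintype W] (H : SimpleGraph W) {k m : ℕ} (hk : 0 < k)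
    (hm : m = Fintype.card W * (k - 1)) :
    (∃ ψ : W ⊕ Fin m → Fin k, IsProperColoring (addIsolated H m) ψ ∧ IsEquitable ψ) ↔
      ∃ c : W → Fin k, IsProperColoring H c := by
  constructor
  · rintro ⟨ψ, hψ, -⟩
    exact ⟨_, isProperColoring_addIsolated.1 hψ⟩
  · rintro ⟨c, hc⟩
    obtain ⟨f, hf⟩ := exists_isEquitable_sumElim hk hm c
    exact ⟨Sum.elim c f, isProperColoring_addIsolated.2 hc, hf⟩

theorem IsPendantPath.exists_coloring [DecidableEq α] {G : SimpleGraph V} {p : ℕ} {w : Fin p → V}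
    (hw : IsPendantPath G w) (c : V → α) {s : Multiset α} (hcard : s.card = p)
    (hcount : ∀ j, 2 * s.count j < p) :
    ∃ f : Fin p → α, univ.val.map f = s ∧
      ∀ φ : V → α, (∀ a, φ (w a) = f a) →
        (∀ a v, v ∉ Set.range w → G.Adj (w a) v → φ v = c v) →
          ∀ a v, G.Adj (w a) v → φ (w a) ≠ φ v := by
  obtain ⟨-, u, v, hu, hv, hadj⟩ := hw
  obtain ⟨l, rfl, hchain⟩ := exists_isChain_ne_of_count_le_s7 s (c u) (c v) fun j => by
    have := hcount j
    have : ({c u, c v} : Multiset α).count j ≤ 2 := Multiset.count_le_card j _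
    omega
  obtain rfl : l.length = p := hcard
  rw [List.isChain_iff_getElem] at hchain
  refine ⟨l.get, (Fin.univ_val_map l.get).trans (congrArg _ l.ofFn_get), ?_⟩
  intro φ hφ hφ_out a b hab
  have hstep (i : ℕ) (hi : i + 1 < l.length) : l[i] ≠ l[i + 1] := by
    have := hchain (i + 1) (by simp; omega)
    grind
  rcases (hadj a b).1 hab with ⟨a', rfl, h | h⟩ | ⟨h, rfl⟩ | ⟨h, rfl⟩
  · have := hstep a (by omega)
    grind
  · have := hstep a' (by omega)
    grind
  · have := hchain 0 (by simp)
    have := hφ_out a b hu hab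
    grind
  · have := hchain l.length (by simp)
    have := hφ_out a b hv hab
    grind

theorem map_val_eq_sum_singleton (s : Finset V) (f : V → α) : s.val.map f = ∑ v ∈ s, {f v} := by
  rw [Finset.sum, ← Multiset.sum_map_singleton (s.val.map f), Multiset.map_map]
  rfl

end Coloring

/-- A family of pairwise disjoint pendant paths of `G`, the `i`-th enumerated by `w i`, such that
`Q` is the set of vertices on none of them and every neighbor of a path lies on that path or in
`Q`. -/
structure IsPendantPathSystem {V ι : Type*} (G : SimpleGraph V) {p : ι → ℕ}
    (w : (i : ι) → Fin (p i) → V) (Q : Finset V) : Prop where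
  isPendantPath : ∀ i, IsPendantPath G (w i)
  disjoint : ∀ i j, i ≠ j → ∀ a b, w i a ≠ w j b
  outside : ∀ i a b, G.Adj (w i a) b →
    (∃ a', b = w i a') ∨ ∀ j a', b ≠ w j a'
  mem_iff : ∀ v, v ∈ Q ↔ ∀ i a, w i a ≠ v

namespace IsPendantPathSystem

variable {V α ι : Type*} {G : SimpleGraph V} {p : ι → ℕ}
  {w : (i : ι) → Fin (p i) → V} {Q : Finset V}

theorem injective (hw : IsPendantPathSystem G w Q) :
    Function.Injective fun y : Σ i, Fin (p i) => w y.1 y.2 := by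
  rintro ⟨i, a⟩ ⟨j, b⟩ hab
  obtain rfl : i = j := by_contra fun hij => hw.disjoint i j hij a b hab
  exact congrArg _ ((hw.isPendantPath i).1 hab)

theorem sum_univ [Fintype V] [Fintype ι] {M : Type*} [AddCommMonoid M]
    (hw : IsPendantPathSystem G w Q) (f : V → M) :
    ∑ v, f v = ∑ v ∈ Q, f v + ∑ i, ∑ a, f (w i a) := by
  classical
  have hcompl : Qᶜ = univ.map ⟨_, hw.injective⟩ := by
    ext v
    simp [hw.mem_iff]
  rw [← Finset.sum_add_sum_compl Q, hcompl, Finset.sum_map, Fintype.sum_sigma]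
  rfl

theorem card_eq [Fintype V] [Fintype ι] (hw : IsPendantPathSystem G w Q) :
    Fintype.card V = #Q + ∑ i, p i := by
  simpa using hw.sum_univ fun _ => (1 : ℕ)

theorem mem_of_adj (hw : IsPendantPathSystem G w Q) {i : ι} {a : Fin (p i)} {v : V}
    (hv : v ∉ Set.range (w i)) (hav : G.Adj (w i a) v) : v ∈ Q := by
  rcases hw.outside i a v hav with ⟨a', rfl⟩ | hout
  · exact absurd ⟨a', rfl⟩ hv
  · exact (hw.mem_iff v).2 fun j a' => (hout j a').symm

theorem exists_extension [Fintype V] [Fintype ι] [DecidableEq α] (hw : IsPendantPathSystem G w Q)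
    (hp : ∀ i, 5 ≤ p i) {c : V → α} (hc : ∀ u ∈ Q, ∀ v ∈ Q, G.Adj u v → c u ≠ c v)
    {d : Multiset α} (hcard : d.card = ∑ i, p i) (hcount : ∀ j, d.count j ≤ ∑ i, (p i - 1) / 2) :
    ∃ φ : V → α, (∀ u v, G.Adj u v → φ u ≠ φ v) ∧ univ.val.map φ = Q.val.map c + d := by
  obtain ⟨s, rfl, hs⟩ := exists_sum_eq_of_count_le (m := 2) (h := fun i => (p i - 1) / 2)
    (fun i => by omega) (fun i => by have := hp i; omega) univ hcard hcount
  have hpath (i : ι) := (hw.isPendantPath i).exists_coloring c (hs i (mem_univ i)).1 fun j => by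
    have := hp i
    have := (hs i (mem_univ i)).2 j
    omega
  choose f hf hf_ne using hpath
  let φ : V → α := Function.extend (fun y : Σ i, Fin (p i) => w y.1 y.2) (fun y => f y.1 y.2) c
  have hφ_path (i : ι) (a : Fin (p i)) : φ (w i a) = f i a :=
    hw.injective.extend_apply (fun y : Σ i, Fin (p i) => f y.1 y.2) c ⟨i, a⟩
  have hφ_Q (v : V) (hv : v ∈ Q) : φ v = c v :=
    Function.extend_apply' _ _ _ fun ⟨y, hy⟩ => (hw.mem_iff v).1 hv y.1 y.2 hy
  have hφ_ne (i : ι) (a : Fin (p i)) (v : V) : G.Adj (w i a) v → φ (w i a) ≠ φ v :=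
    hf_ne i φ (hφ_path i) (fun _ v hv hav => hφ_Q v (hw.mem_of_adj hv hav)) a v
  refine ⟨φ, fun u v huv => ?_, ?_⟩
  · by_cases hu : u ∈ Q
    · by_cases hv : v ∈ Q
      · rw [hφ_Q u hu, hφ_Q v hv]
        exact hc u hu v hv huv
      · obtain ⟨i, a, rfl⟩ : ∃ i a, w i a = v := by simpa [hw.mem_iff] using hv
        exact (hφ_ne i a u huv.symm).symm
    · obtain ⟨i, a, rfl⟩ : ∃ i a, w i a = u := by simpa [hw.mem_iff] using hu
      exact hφ_ne i a v huv
  · rw [map_val_eq_sum_singleton, hw.sum_univ, ← map_val_eq_sum_singleton]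
    simp only [hφ_path, ← map_val_eq_sum_singleton, hf]
    rw [Multiset.map_congr rfl hφ_Q]

theorem exists_isEquitable_iff [Fintype V] [Fintype ι] {k : ℕ} (hk : 0 < k)
    (hw : IsPendantPathSystem G w Q) (hp : ∀ i, 5 ≤ p i) (hQ : #Q * k ≤ Fintype.card V)
    (hV : Fintype.card V ≤ k * ∑ i, (p i - 1) / 2) :
    (∃ φ : V → Fin k, IsProperColoring G φ ∧ IsEquitable φ) ↔
      ∃ c : (↑Q : Set V) → Fin k, IsProperColoring (G.induce (Q : Set V)) c := by
  constructor
  · rintro ⟨φ, hφ, -⟩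
    exact ⟨fun v => φ v, fun u v huv => hφ u v huv⟩
  rintro ⟨c, hc⟩
  have : NeZero k := ⟨hk.ne'⟩
  obtain ⟨c, rfl⟩ := Subtype.val_injective.surjective_comp_right c
  obtain ⟨t, ht_card, ht⟩ :=
    exists_card_eq_count_eq_div_or_ceilDiv (α := Fin k) (by simpa) (Fintype.card V)
  rw [Fintype.card_fin] at ht
  have hfloor : #Q ≤ Fintype.card V / k := (Nat.le_div_iff_mul_le hk).2 hQ
  have hceil : Fintype.card V ⌈/⌉ k ≤ ∑ i, (p i - 1) / 2 := (ceilDiv_le_iff_le_mul hk).2 hV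
  have hfloor_le : Fintype.card V / k ≤ Fintype.card V ⌈/⌉ k := Nat.div_le_div_right (by omega)
  have hct : Q.val.map c ≤ t := Multiset.le_iff_count.2 fun j => by
    have : (Q.val.map c).count j ≤ #Q := (Multiset.count_le_card j _).trans_eq (by simp)
    have := ht j
    omega
  obtain ⟨d, rfl⟩ := Multiset.le_iff_exists_add.1 hct
  have hd_card : d.card = ∑ i, p i := by
    rw [hw.card_eq, Multiset.card_add, Multiset.card_map, Finset.card_val] at ht_card
    omega
  obtain ⟨φ, hφ, hmap⟩ := hw.exists_extension hp (c := c)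
    (fun u hu v hv huv => hc ⟨u, hu⟩ ⟨v, hv⟩ huv) hd_card fun j => by
      have := ht j
      rw [Multiset.count_add] at this
      omega
  exact ⟨φ, hφ, (isEquitable_iff_count φ).2 (hmap ▸ ht)⟩

theorem card_mul_le_card [Fintype V] [Fintype ι] (hw : IsPendantPathSystem G w Q) {k : ℕ}
    {x : ι → ℕ} (hx : ∀ i, x i * k ≤ p i) (hQ : #Q ≤ ∑ i, x i) : #Q * k ≤ Fintype.card V :=
  calc #Q * k ≤ (∑ i, x i) * k := Nat.mul_le_mul_right k hQ
    _ ≤ ∑ i, p i := by rw [Finset.sum_mul]; exact sum_le_sum fun i _ => hx i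
    _ ≤ Fintype.card V := by rw [hw.card_eq]; exact Nat.le_add_left _ _

theorem card_le_mul_sum [Fintype V] [Fintype ι] (hw : IsPendantPathSystem G w Q) {k : ℕ}
    {x h : ι → ℕ} (hx : ∀ i, x i + p i ≤ k * h i) (hQ : #Q ≤ ∑ i, x i) :
    Fintype.card V ≤ k * ∑ i, h i :=
  calc Fintype.card V = #Q + ∑ i, p i := hw.card_eq
    _ ≤ ∑ i, (x i + p i) := by rw [sum_add_distrib]; exact Nat.add_le_add_right hQ _
    _ ≤ k * ∑ i, h i := by rw [Finset.mul_sum]; exact sum_le_sum fun i _ => hx i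

end IsPendantPathSystem

theorem add_le_mul_pred_div_two {k p x : ℕ} (hk : 3 ≤ k) (hx : 1 ≤ x)
    (hp : k + 2 + x * (k + 1) ≤ p) : x + p ≤ k * ((p - 1) / 2) := by
  have h₁ : 3 * ((p - 1) / 2) ≤ k * ((p - 1) / 2) := Nat.mul_le_mul_right _ hk
  have h₂ : x * 4 ≤ x * (k + 1) := Nat.mul_le_mul_left x (by omega)
  omega

-- `(p i - 1) / 2` is the most often a single color can occur on the `i`-th path when both of its
-- ends are attached to vertices of that color.
theorem stmt7_general {V ι : Type*} [Fintype V] [Fintype ι] {G : SimpleGraph V} {k : ℕ}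
    (hk : 0 < k) {p : ι → ℕ} {w : (i : ι) → Fin (p i) → V} {Q : Finset V}
    (hw : IsPendantPathSystem G w Q) (hp : ∀ i, 5 ≤ p i) (hQ : #Q * k ≤ Fintype.card V)
    (hV : Fintype.card V ≤ k * ∑ i, (p i - 1) / 2) :
    (∃ φ : V → Fin k, IsProperColoring G φ ∧ IsEquitable φ) ↔
    (∃ ψ : (↑Q : Set V) ⊕ Fin (Q.card * (k - 1)) → Fin k,
      IsProperColoring (addIsolated (G.induce (↑Q : Set V)) (Q.card * (k - 1))) ψ ∧
      IsEquitable ψ) :=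
  (hw.exists_isEquitable_iff hk hp hQ hV).trans
    (exists_isEquitable_addIsolated_iff _ hk (by simp)).symm

/-- If `G` contains pairwise disjoint pendant paths `P_1, …, P_r`, each with
`p i = k + 2 + c i + x i * (k+1) ≥ 2k + 3` vertices (`x i ≥ 1`, `0 ≤ c i ≤ k`), whose
endpoints' outside neighbors lie in `Q = V(G) \ (P_1 ∪ ⋯ ∪ P_r)`, and `x_1 + ⋯ + x_r ≥ |Q|`,
then `G` is equitably `k`-colorable iff the graph obtained from the subgraph induced by `Q`
by adding `|Q| * (k-1)` isolated vertices is equitably `k`-colorable. -/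
theorem stmt7 {V : Type*} [Fintype V] [DecidableEq V] (G : SimpleGraph V)
    (k r : ℕ) (hk : 3 ≤ k) (p x c : Fin r → ℕ)
    (hx : ∀ i, 1 ≤ x i) (hc : ∀ i, c i ≤ k)
    (hp : ∀ i, p i = k + 2 + c i + x i * (k + 1))
    (hbig : ∀ i, 2 * k + 3 ≤ p i)
    (w : (i : Fin r) → Fin (p i) → V)
    (hpath : ∀ i, IsPendantPath G (w i))
    (hdisj : ∀ i j : Fin r, i ≠ j → ∀ a b, w i a ≠ w j b)
    (hnbr : ∀ (i : Fin r) (a : Fin (p i)) (b : V), G.Adj (w i a) b →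
      (∃ a', b = w i a') ∨ (∀ (j : Fin r) (a' : Fin (p j)), b ≠ w j a'))
    (Q : Finset V) (hQ : ∀ v : V, v ∈ Q ↔ ∀ (i : Fin r) (a : Fin (p i)), w i a ≠ v)
    (hsum : Q.card ≤ ∑ i, x i) :
    (∃ φ : V → Fin k, IsProperColoring G φ ∧ IsEquitable φ) ↔
    (∃ ψ : (↑Q : Set V) ⊕ Fin (Q.card * (k - 1)) → Fin k,
      IsProperColoring (addIsolated (G.induce (↑Q : Set V)) (Q.card * (k - 1))) ψ ∧
      IsEquitable ψ) := by
  have hw : IsPendantPathSystem G w Q := ⟨hpath, hdisj, hnbr, hQ⟩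
  exact stmt7_general (by omega) hw (fun i => by have := hbig i; omega)
    (hw.card_mul_le_card (fun i => by rw [hp i, Nat.mul_succ]; omega) hsum)
    (hw.card_le_mul_sum (fun i => add_le_mul_pred_div_two hk (hx i) (by have := hp i; omega)) hsum)
end
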